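/- arXiv:2512.14326 — 5 statements merged into one kernel-verified Lean document; each statement's English description precedes it below -/
import Mathlib

section
/- Let K be an elementary class of algebras (a class of similar algebras axiomatized by a set of first-order formulas in a purely functional language). A partial function f on K is an implicit operation of K if and only if f is defined by an existential positive formula. -/
namespace Impl

open FirstOrder Language

universe u v

/-- A bundled algebra (first-order structure) for the language `L`. -/
structure Alg (L : FirstOrder.Language.{u, u}) : Type (u + 1) where
  carrier : Type u
  [str : L.Structure carrier]

attribute [instance] Alg.str

variable {L : FirstOrder.Language.{u, u}}

/-- The direct product of a family of algebras. -/
def Alg.pi {ι : Type u} (A : ι → Alg L) : Alg L where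
  carrier := ∀ i, (A i).carrier
  str :=
    { funMap := fun {k} f v i => Structure.funMap f fun j => v j i
      RelMap := fun {k} r v => ∀ i, Structure.RelMap r fun j => v j i }

/-- The binary direct product of two algebras. -/
def Alg.prod (A B : Alg L) : Alg L where
  carrier := A.carrier × B.carrier
  str :=
    { funMap := fun {k} f v =>
        (Structure.funMap f fun j => (v j).1, Structure.funMap f fun j => (v j).2)
      RelMap := fun {k} r v =>
        Structure.RelMap r (fun j => (v j).1) ∧ Structure.RelMap r fun j => (v j).2 }

/-- The ultraproduct of a family of algebras with respect to an ultrafilter. -/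
def Alg.uprod {ι : Type u} (F : Ultrafilter ι) (A : ι → Alg L) : Alg L where
  carrier := Filter.Product (F : Filter ι) fun i => (A i).carrier
  str := inferInstance

/-- Closure under isomorphic copies. -/
def ClosedUnderIso (K : Set (Alg L)) : Prop :=
  ∀ A B : Alg L, A ∈ K → Nonempty (A.carrier ≃[L] B.carrier) → B ∈ K

/-- Closure under subalgebras (up to the identification of a subalgebra with an embedding). -/
def ClosedUnderSub (K : Set (Alg L)) : Prop :=
  ∀ A B : Alg L, B ∈ K → Nonempty (A.carrier ↪[L] B.carrier) → A ∈ K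

/-- Closure under direct products. -/
def ClosedUnderProd (K : Set (Alg L)) : Prop :=
  ∀ (ι : Type u) (A : ι → Alg L), (∀ i, A i ∈ K) → Alg.pi A ∈ K

/-- Closure under finite direct products. -/
def ClosedUnderFinProd (K : Set (Alg L)) : Prop :=
  ∀ (ι : Type u), Finite ι → ∀ A : ι → Alg L, (∀ i, A i ∈ K) → Alg.pi A ∈ K

/-- Closure under homomorphic images. -/
def ClosedUnderHomImg (K : Set (Alg L)) : Prop :=
  ∀ A B : Alg L, A ∈ K → ∀ h : A.carrier →[L] B.carrier, Function.Surjective h → B ∈ K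

/-- Closure under ultraproducts. -/
def ClosedUnderUprod (K : Set (Alg L)) : Prop :=
  ∀ (ι : Type u) (F : Ultrafilter ι) (A : ι → Alg L), (∀ i, A i ∈ K) → Alg.uprod F A ∈ K

/-- A universal class: a class closed under isomorphic copies, subalgebras and ultraproducts. -/
def IsUniversalClass (K : Set (Alg L)) : Prop :=
  ClosedUnderIso K ∧ ClosedUnderSub K ∧ ClosedUnderUprod K

/-- A quasivariety: a class closed under isomorphic copies, subalgebras, direct products and
ultraproducts. -/
def IsQuasivariety (K : Set (Alg L)) : Prop :=
  ClosedUnderIso K ∧ ClosedUnderSub K ∧ ClosedUnderProd K ∧ ClosedUnderUprod K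

/-- A variety: a class closed under homomorphic images, subalgebras and direct products. -/
def IsVariety (K : Set (Alg L)) : Prop :=
  ClosedUnderHomImg K ∧ ClosedUnderSub K ∧ ClosedUnderProd K

/-- The least quasivariety containing `K`. -/
def QGen (K : Set (Alg L)) : Set (Alg L) :=
  ⋂₀ { M : Set (Alg L) | IsQuasivariety M ∧ K ⊆ M }

/-- The least variety containing `K`. -/
def VGen (K : Set (Alg L)) : Set (Alg L) :=
  ⋂₀ { M : Set (Alg L) | IsVariety M ∧ K ⊆ M }

/-- An elementary class: the class of all models of some first-order theory. -/
def IsElementary (K : Set (Alg L)) : Prop :=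
  ∃ T : L.Theory, ∀ A : Alg L, A ∈ K ↔ ∀ φ ∈ T, A.carrier ⊨ φ

/-- Finite conjunctions of equations (with `⊤` as the empty conjunction). -/
inductive IsConjEq {α : Type v} : ∀ {k : ℕ}, L.BoundedFormula α k → Prop
  | top {k} : IsConjEq (⊤ : L.BoundedFormula α k)
  | equal {k} (t₁ t₂ : L.Term (α ⊕ Fin k)) : IsConjEq (BoundedFormula.equal t₁ t₂)
  | inf {k} {φ ψ : L.BoundedFormula α k} : IsConjEq φ → IsConjEq ψ → IsConjEq (φ ⊓ ψ)

/-- Positive quantifier-free formulas: built from equations, `⊤` and `⊥` using `⊓` and `⊔`. -/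
inductive IsPosQF {α : Type v} : ∀ {k : ℕ}, L.BoundedFormula α k → Prop
  | falsum {k} : IsPosQF (⊥ : L.BoundedFormula α k)
  | top {k} : IsPosQF (⊤ : L.BoundedFormula α k)
  | equal {k} (t₁ t₂ : L.Term (α ⊕ Fin k)) : IsPosQF (BoundedFormula.equal t₁ t₂)
  | inf {k} {φ ψ : L.BoundedFormula α k} : IsPosQF φ → IsPosQF ψ → IsPosQF (φ ⊓ ψ)
  | sup {k} {φ ψ : L.BoundedFormula α k} : IsPosQF φ → IsPosQF ψ → IsPosQF (φ ⊔ ψ)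

/-- Primitive positive (pp) formulas: existentially quantified finite conjunctions of
equations. -/
inductive IsPP {α : Type v} : ∀ {k : ℕ}, L.BoundedFormula α k → Prop
  | of_conjEq {k} {φ : L.BoundedFormula α k} : IsConjEq φ → IsPP φ
  | ex {k} {φ : L.BoundedFormula α (k + 1)} : IsPP φ → IsPP φ.ex

/-- Existential positive formulas: existentially quantified positive quantifier-free
formulas. -/
inductive IsExistPos {α : Type v} : ∀ {k : ℕ}, L.BoundedFormula α k → Prop
  | of_posQF {k} {φ : L.BoundedFormula α k} : IsPosQF φ → IsExistPos φ
  | ex {k} {φ : L.BoundedFormula α (k + 1)} : IsExistPos φ → IsExistPos φ.ex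

/-- Two formulas are equivalent in a class of algebras. -/
def EquivOn (K : Set (Alg L)) {α : Type v} (φ ψ : L.Formula α) : Prop :=
  ∀ A : Alg L, A ∈ K → ∀ x : α → A.carrier, φ.Realize x ↔ ψ.Realize x

/-- A formula is preserved by homomorphisms in `K`. -/
def PreservedByHomsOn (K : Set (Alg L)) {α : Type v} (φ : L.Formula α) : Prop :=
  ∀ A B : Alg L, A ∈ K → B ∈ K → ∀ (h : A.carrier →[L] B.carrier) (x : α → A.carrier),
    φ.Realize x → φ.Realize fun a => h (x a)

/-- A formula is preserved by direct products in `K`. -/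
def PreservedByProdsOn (K : Set (Alg L)) {α : Type v} (φ : L.Formula α) : Prop :=
  ∀ (ι : Type u) (A : ι → Alg L), (∀ i, A i ∈ K) → ∀ x : α → (Alg.pi A).carrier,
    (∀ i, φ.Realize fun a => x a i) → φ.Realize x

/-- An `n`-ary partial function on a class of algebras `K`: a family assigning to each member of
`K` an `n`-ary partial function on its carrier. -/
def PartialFunOn (K : Set (Alg L)) (n : ℕ) :=
  ∀ (A : Alg L), A ∈ K → ((Fin n → A.carrier) →. A.carrier)

/-- A partial function on `K` is defined by the formula `φ(x₁, …, xₙ, y)` (the last variable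
being the output) when its graph on each member of `K` is the solution set of `φ`. -/
def DefinedBy {K : Set (Alg L)} {n : ℕ} (f : PartialFunOn K n)
    (φ : L.Formula (Fin (n + 1))) : Prop :=
  ∀ (A : Alg L) (hA : A ∈ K) (x : Fin n → A.carrier) (b : A.carrier),
    b ∈ f A hA x ↔ φ.Realize (Fin.snoc x b)

/-- The formula `φ(x₁, …, xₙ, y)` is functional in `K`: for all inputs there is at most one
output satisfying it. -/
def FunctionalIn (K : Set (Alg L)) {n : ℕ} (φ : L.Formula (Fin (n + 1))) : Prop :=
  ∀ A : Alg L, A ∈ K → ∀ (x : Fin n → A.carrier) (b₁ b₂ : A.carrier),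
    φ.Realize (Fin.snoc x b₁) → φ.Realize (Fin.snoc x b₂) → b₁ = b₂

/-- A partial function on `K` is an operation of `K` when it is preserved by all homomorphisms
between members of `K`. -/
def IsOperationOn {K : Set (Alg L)} {n : ℕ} (f : PartialFunOn K n) : Prop :=
  ∀ (A B : Alg L) (hA : A ∈ K) (hB : B ∈ K) (h : A.carrier →[L] B.carrier)
    (x : Fin n → A.carrier) (b : A.carrier),
    b ∈ f A hA x → h b ∈ f B hB fun i => h (x i)

/-- A partial function on `K` is implicit when it is defined by some formula. -/
def IsImplicit {K : Set (Alg L)} {n : ℕ} (f : PartialFunOn K n) : Prop :=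
  ∃ φ : L.Formula (Fin (n + 1)), DefinedBy f φ

/-- An implicit operation of `K`: a partial function that is both implicit and an operation. -/
def IsImplicitOp {K : Set (Alg L)} {n : ℕ} (f : PartialFunOn K n) : Prop :=
  IsImplicit f ∧ IsOperationOn f

/-- An implicit operation is extendable when every tuple in every member of `K` lies in the
domain of the operation in some extension inside `K`. -/
def Extendable {K : Set (Alg L)} {n : ℕ} (f : PartialFunOn K n) : Prop :=
  ∀ (A : Alg L) (hA : A ∈ K) (x : Fin n → A.carrier),
    ∃ (B : Alg L) (hB : B ∈ K) (e : A.carrier ↪[L] B.carrier),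
      (f B hB fun i => e (x i)).Dom

/-- The dominion of a subset `s` of `M` relative to the class `K`. -/
def dominion (K : Set (Alg L)) (M : Type u) [L.Structure M] (s : Set M) : Set M :=
  { b | ∀ C : Alg L, C ∈ K → ∀ g h : M →[L] C.carrier, (∀ a ∈ s, g a = h a) → g b = h b }

/-- The strong epimorphism surjectivity property. -/
def StrongES (K : Set (Alg L)) : Prop :=
  ∀ (A B : Alg L), A ∈ K → B ∈ K → ∀ (f : A.carrier →[L] B.carrier) (b : B.carrier),
    b ∉ Set.range f →
      ∃ C : Alg L, C ∈ K ∧ ∃ g h : B.carrier →[L] C.carrier,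
        (∀ a : A.carrier, g (f a) = h (f a)) ∧ g b ≠ h b

/-- The weak epimorphism surjectivity property: every `K`-epimorphism between finitely
generated members of `K` is surjective. -/
def WeakES (K : Set (Alg L)) : Prop :=
  ∀ (A B : Alg L), A ∈ K → B ∈ K →
    Structure.FG L A.carrier → Structure.FG L B.carrier →
      ∀ f : A.carrier →[L] B.carrier,
        (∀ C : Alg L, C ∈ K → ∀ g h : B.carrier →[L] C.carrier,
          (∀ a : A.carrier, g (f a) = h (f a)) → g = h) →
        Function.Surjective f

/-- The amalgamation property. -/
def HasAmalgamation (K : Set (Alg L)) : Prop :=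
  ∀ (A B C : Alg L), A ∈ K → B ∈ K → C ∈ K →
    ∀ (f : A.carrier ↪[L] B.carrier) (g : A.carrier ↪[L] C.carrier),
      ∃ D : Alg L, D ∈ K ∧ ∃ (f' : B.carrier ↪[L] D.carrier) (g' : C.carrier ↪[L] D.carrier),
        ∀ a : A.carrier, f' (f a) = g' (g a)

/-- A finitely presented member of `K`: an algebra in `K` with a finite presentation, phrased
through the usual universal property of `T(X)/Cg_K(Y)`. -/
def FinitelyPresentedIn (K : Set (Alg L)) (B : Alg L) : Prop :=
  B ∈ K ∧ ∃ (m : ℕ) (Y : Finset (L.Term (Fin m) × L.Term (Fin m))) (b : Fin m → B.carrier),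
    Substructure.closure L (Set.range b) = ⊤ ∧
    (∀ p ∈ Y, p.1.realize b = p.2.realize b) ∧
    ∀ C : Alg L, C ∈ K → ∀ x : Fin m → C.carrier,
      (∀ p ∈ Y, p.1.realize x = p.2.realize x) →
        ∃ g : B.carrier →[L] C.carrier, ∀ i, g (b i) = x i

/-- Subdirectly irreducible relative to `K`. -/
def IsRSI (K : Set (Alg L)) (A : Alg L) : Prop :=
  A ∈ K ∧ ∀ (ι : Type u) (B : ι → Alg L), (∀ i, B i ∈ K) →
    ∀ h : A.carrier ↪[L] (Alg.pi B).carrier,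
      (∀ i, Function.Surjective fun a => h a i) →
        ∃ i, Function.Bijective fun a => h a i

/-- Finitely subdirectly irreducible relative to `K`. -/
def IsRFSI (K : Set (Alg L)) (A : Alg L) : Prop :=
  A ∈ K ∧ ∀ (ι : Type u), Finite ι → ∀ B : ι → Alg L, (∀ i, B i ∈ K) →
    ∀ h : A.carrier ↪[L] (Alg.pi B).carrier,
      (∀ i, Function.Surjective fun a => h a i) →
        ∃ i, Function.Bijective fun a => h a i

/-- A congruence on an algebra: an equivalence relation compatible with all the operations. -/
def IsCongruenceOn (A : Alg L) (θ : A.carrier → A.carrier → Prop) : Prop :=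
  Equivalence θ ∧
    ∀ (k : ℕ) (f : L.Functions k) (x y : Fin k → A.carrier),
      (∀ i, θ (x i) (y i)) → θ (Structure.funMap f x) (Structure.funMap f y)

/-- The quotient of an algebra by (the setoid of) an equivalence relation; when the relation is
a congruence this is the quotient algebra. -/
noncomputable def Alg.quot (A : Alg L) (θ : A.carrier → A.carrier → Prop) (h : Equivalence θ) :
    Alg L where
  carrier := Quotient (⟨θ, h⟩ : Setoid A.carrier)
  str :=
    { funMap := fun {k} f v => Quotient.mk _ (Structure.funMap f fun i => (v i).out)
      RelMap := fun {k} r v => Structure.RelMap r fun i => (v i).out }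

/-- A `K`-congruence of `A`: a congruence whose quotient lies in `K`. -/
def IsRelCong (K : Set (Alg L)) (A : Alg L) (θ : A.carrier → A.carrier → Prop) : Prop :=
  ∃ h : IsCongruenceOn A θ, Alg.quot A θ h.1 ∈ K

/-- The join of two relations in the lattice of `K`-congruences of `A`. -/
def relCongJoin (K : Set (Alg L)) (A : Alg L)
    (θ φ : A.carrier → A.carrier → Prop) (x y : A.carrier) : Prop :=
  ∀ ρ : A.carrier → A.carrier → Prop, IsRelCong K A ρ →
    (∀ a b, θ a b → ρ a b) → (∀ a b, φ a b → ρ a b) → ρ x y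

/-- Relative congruence distributivity: the lattice of `K`-congruences of each member of `K`
is distributive. -/
def RelCongDistributive (K : Set (Alg L)) : Prop :=
  ∀ A : Alg L, A ∈ K → ∀ θ φ ψ : A.carrier → A.carrier → Prop,
    IsRelCong K A θ → IsRelCong K A φ → IsRelCong K A ψ →
      ∀ x y : A.carrier,
        (θ x y ∧ relCongJoin K A φ ψ x y) ↔
          relCongJoin K A (fun a b => θ a b ∧ φ a b) (fun a b => θ a b ∧ ψ a b) x y

/-- The join of two relations in the lattice of congruences of `A`. -/
def congJoin (A : Alg L) (θ φ : A.carrier → A.carrier → Prop) (x y : A.carrier) : Prop :=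
  ∀ ρ : A.carrier → A.carrier → Prop, IsCongruenceOn A ρ →
    (∀ a b, θ a b → ρ a b) → (∀ a b, φ a b → ρ a b) → ρ x y

/-- Congruence permutability for all members of a class. -/
def CongPermutableClass (K : Set (Alg L)) : Prop :=
  ∀ A : Alg L, A ∈ K → ∀ θ φ : A.carrier → A.carrier → Prop,
    IsCongruenceOn A θ → IsCongruenceOn A φ →
      ∀ x y : A.carrier, (∃ z, θ x z ∧ φ z y) ↔ ∃ z, φ x z ∧ θ z y

/-- Congruence distributivity for all members of a class. -/
def CongDistributiveClass (K : Set (Alg L)) : Prop :=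
  ∀ A : Alg L, A ∈ K → ∀ θ φ ψ : A.carrier → A.carrier → Prop,
    IsCongruenceOn A θ → IsCongruenceOn A φ → IsCongruenceOn A ψ →
      ∀ x y : A.carrier,
        (θ x y ∧ congJoin A φ ψ x y) ↔
          congJoin A (fun a b => θ a b ∧ φ a b) (fun a b => θ a b ∧ ψ a b) x y

/-- The congruence extension property. -/
def HasCEP (K : Set (Alg L)) : Prop :=
  ∀ A B : Alg L, A ∈ K → B ∈ K → ∀ e : A.carrier ↪[L] B.carrier,
    ∀ θ : A.carrier → A.carrier → Prop, IsCongruenceOn A θ →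
      ∃ ρ : B.carrier → B.carrier → Prop, IsCongruenceOn B ρ ∧
        ∀ x y : A.carrier, θ x y ↔ ρ (e x) (e y)

/-- The language consisting of one new function symbol `gᵢ` of arity `ar i` for each `i`. -/
def newLang {ι : Type u} (ar : ι → ℕ) : FirstOrder.Language.{u, u} where
  Functions := fun n => { i : ι // ar i = n }
  Relations := fun _ => PEmpty

/-- The `L`-reduct of an algebra in an expanded language `L.sum N`. -/
def algReduct {N : FirstOrder.Language.{u, u}} (B : Alg (L.sum N)) : Alg L where
  carrier := B.carrier
  str := (LHom.sumInl : L →ᴸ L.sum N).reduct B.carrier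

/-- The class `K[L_F]` of expansions of members of `K` on which each operation in the family
`f` is total, interpreting the new symbol `gᵢ` as `f i`. -/
def expClass (K : Set (Alg L)) {ι : Type u} (ar : ι → ℕ)
    (f : ∀ i, PartialFunOn K (ar i)) : Set (Alg (L.sum (newLang ar))) :=
  { B | ∃ hB : algReduct B ∈ K,
      ∀ (i : ι) (x : Fin (ar i) → B.carrier),
        Structure.funMap (L := L.sum (newLang ar)) (M := B.carrier)
            (Sum.inr ⟨i, rfl⟩ : (L.sum (newLang ar)).Functions (ar i)) x
          ∈ f i (algReduct B) hB x }

/-- Closure under subalgebras (and isomorphic copies) inside a fixed language. -/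
def SClosure {L' : FirstOrder.Language.{u, u}} (S : Set (Alg L')) : Set (Alg L') :=
  { A | ∃ B ∈ S, Nonempty (A.carrier ↪[L'] B.carrier) }

/-- Membership in `ext_pp(K)`: an extendable implicit operation defined by a pp formula. -/
def InExtPP {K : Set (Alg L)} {n : ℕ} (f : PartialFunOn K n) : Prop :=
  IsOperationOn f ∧ (∃ φ : L.Formula (Fin (n + 1)), IsPP φ ∧ DefinedBy f φ) ∧ Extendable f

/-- `M` is the pp expansion of `K` induced by the family `f` of extendable pp-definable
implicit operations, with one new symbol of arity `ar i` for each `i`. -/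
def IsPPExpansionVia (K : Set (Alg L)) {ι : Type u} (ar : ι → ℕ)
    (f : ∀ i, PartialFunOn K (ar i)) (M : Set (Alg (L.sum (newLang ar)))) : Prop :=
  (∀ i, 0 < ar i) ∧ (∀ i, InExtPP (f i)) ∧ M = SClosure (expClass K ar f)

/-- Every implicit operation of `K` is interpolated in `M` by a set of terms of the expanded
language. -/
def InterpolatesByTermsInExp (K : Set (Alg L)) {ι : Type u} {ar : ι → ℕ}
    (M : Set (Alg (L.sum (newLang ar)))) : Prop :=
  ∀ n : ℕ, 0 < n → ∀ g : PartialFunOn K n, IsImplicitOp g →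
    ∃ T : Set ((L.sum (newLang ar)).Term (Fin n)),
      ∀ A : Alg (L.sum (newLang ar)), A ∈ M →
        ∀ (hA : algReduct A ∈ K) (x : Fin n → A.carrier) (b : A.carrier),
          b ∈ g (algReduct A) hA x → ∃ t ∈ T, t.realize x = b

/-- `M` is a Beth companion of `K` (via the given expansion datum). -/
def IsBethCompanionVia (K : Set (Alg L)) {ι : Type u} (ar : ι → ℕ)
    (f : ∀ i, PartialFunOn K (ar i)) (M : Set (Alg (L.sum (newLang ar)))) : Prop :=
  IsPPExpansionVia K ar f M ∧ InterpolatesByTermsInExp K M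

/-- A pp expansion is congruence preserving when the `M`-congruences of each member of `M`
coincide with the `K`-congruences of its `L`-reduct. -/
def CongPreserving {N : FirstOrder.Language.{u, u}} (K : Set (Alg L))
    (M : Set (Alg (L.sum N))) : Prop :=
  ∀ A : Alg (L.sum N), A ∈ M → ∀ θ : A.carrier → A.carrier → Prop,
    IsRelCong M A θ ↔ IsRelCong K (algReduct A) θ

/-- Reinterpretation of an `L₁`-algebra as an `L₂`-algebra along a map sending `L₂`-symbols to
`L₁`-terms (both languages are assumed to be purely functional). -/
def reinterpret {L₁ L₂ : FirstOrder.Language.{u, u}} (ρ : ∀ n, L₂.Functions n → L₁.Term (Fin n))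
    (A : Alg L₁) : Alg L₂ where
  carrier := A.carrier
  str :=
    { funMap := fun {k} s x => (ρ k s).realize x
      RelMap := fun {k} _ _ => False }

/-- Two expansions of the same base language `L` are faithfully term equivalent relative to
`L`. -/
def FaithfullyTermEquivRel (L : FirstOrder.Language.{u, u}) {N₁ N₂ : FirstOrder.Language.{u, u}}
    (M₁ : Set (Alg (L.sum N₁))) (M₂ : Set (Alg (L.sum N₂))) : Prop :=
  ∃ (τ : ∀ n, (L.sum N₁).Functions n → (L.sum N₂).Term (Fin n))
    (ρ : ∀ n, (L.sum N₂).Functions n → (L.sum N₁).Term (Fin n)),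
    (∀ (n : ℕ) (s : L.Functions n),
      τ n (Sum.inl s) = Term.func (Sum.inl s : (L.sum N₂).Functions n) Term.var) ∧
    (∀ (n : ℕ) (s : L.Functions n),
      ρ n (Sum.inl s) = Term.func (Sum.inl s : (L.sum N₁).Functions n) Term.var) ∧
    (∀ A : Alg (L.sum N₁), A ∈ M₁ → reinterpret ρ A ∈ M₂) ∧
    (∀ B : Alg (L.sum N₂), B ∈ M₂ → reinterpret τ B ∈ M₁) ∧
    (∀ A : Alg (L.sum N₁), A ∈ M₁ → reinterpret τ (reinterpret ρ A) = A) ∧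
    (∀ B : Alg (L.sum N₂), B ∈ M₂ → reinterpret ρ (reinterpret τ B) = B)

/-!
Existential positive formulas are preserved by homomorphisms. Conversely, suppose that `φ` is
preserved by the homomorphisms of `K`.

If `A ∈ K` satisfies `φ(a)`, every realization in a member of `K` of the equations that hold in `A`
(with a variable for each element of `A` and each entry of `a`) comes from a homomorphism out of
`A`, hence realizes `φ`. By compactness finitely many of these equations suffice, and quantifying
out the elements of `A` turns them into an existential positive formula which holds at `a` and
implies `φ` in `K`.

So, in `K`, the formula `φ` is equivalent to the infinite disjunction of the existential positive
formulas that imply it. By compactness again, a finite part of the disjunction suffices.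

Compactness comes from ultraproducts. Since algebras may be empty, and Łoś's theorem as well as
vacuous quantification need nonempty structures, there is always at least one free variable.
-/

section PositiveFormulas

variable {α : Type*} {β : Type*} {k : ℕ}

theorem isPosQF_termEqual (t₁ t₂ : L.Term α) : IsPosQF (t₁.equal t₂) :=
  .equal _ _

theorem IsPosQF.relabel {m : ℕ} {φ : L.BoundedFormula α k} (hφ : IsPosQF φ)
    (g : α → β ⊕ Fin m) : IsPosQF (φ.relabel g) := by
  induction hφ with
  | falsum => exact .falsum
  | top => exact .top
  | equal t₁ t₂ => exact .equal _ _
  | inf _ _ ih₁ ih₂ => exact .inf ih₁ ih₂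
  | sup _ _ ih₁ ih₂ => exact .sup ih₁ ih₂

theorem IsPosQF.restrictFreeVar [DecidableEq α] {φ : L.BoundedFormula α k} (hφ : IsPosQF φ)
    (g : φ.freeVarFinset → β) : IsPosQF (φ.restrictFreeVar g) := by
  induction hφ with
  | falsum => exact .falsum
  | top => exact .top
  | equal t₁ t₂ => exact .equal _ _
  | inf _ _ ih₁ ih₂ => exact .inf (ih₁ _) (ih₂ _)
  | sup _ _ ih₁ ih₂ => exact .sup (ih₁ _) (ih₂ _)

theorem IsPosQF.toFormula {φ : L.BoundedFormula α k} (hφ : IsPosQF φ) : IsPosQF φ.toFormula := by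
  induction hφ with
  | falsum => exact .falsum
  | top => exact .top
  | equal t₁ t₂ => exact .equal _ _
  | inf _ _ ih₁ ih₂ => exact .inf ih₁ ih₂
  | sup _ _ ih₁ ih₂ => exact .sup ih₁ ih₂

theorem IsPosQF.iInf [Finite β] {φ : β → L.Formula α} (hφ : ∀ b, IsPosQF (φ b)) :
    IsPosQF (Formula.iInf φ) := by
  simp only [Formula.iInf, BoundedFormula.iInf]
  induction (@Finset.univ β (Fintype.ofFinite β)).toList with
  | nil => exact .top
  | cons b _ ih => exact .inf (hφ b) ih

theorem IsPosQF.iSup [Finite β] {φ : β → L.Formula α} (hφ : ∀ b, IsPosQF (φ b)) :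
    IsPosQF (Formula.iSup φ) := by
  simp only [Formula.iSup, BoundedFormula.iSup]
  induction (@Finset.univ β (Fintype.ofFinite β)).toList with
  | nil => exact .falsum
  | cons b _ ih => exact .sup (hφ b) ih

theorem IsExistPos.exs {φ : L.BoundedFormula α k} (hφ : IsExistPos φ) : IsExistPos φ.exs := by
  induction k with
  | zero => exact hφ
  | succ k ih => exact ih hφ.ex

theorem IsPosQF.isExistPos_iExs [Finite β] {φ : L.Formula (α ⊕ β)} (hφ : IsPosQF φ) :
    IsExistPos (φ.iExs β) :=
  (IsExistPos.of_posQF (hφ.relabel _)).exs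

theorem IsExistPos.exists_isPosQF_exs_eq {φ : L.BoundedFormula α k} (hφ : IsExistPos φ) :
    ∃ (m : ℕ) (χ : L.BoundedFormula α m), IsPosQF χ ∧ χ.exs = φ.exs := by
  induction hφ with
  | of_posQF hφ => exact ⟨_, _, hφ, rfl⟩
  | ex _ ih => exact ih

theorem IsPosQF.exists_isExistPos_realize_iff {φ : L.Formula (α ⊕ β)} (hφ : IsPosQF φ) :
    ∃ ψ : L.Formula α, IsExistPos ψ ∧
      ∀ (M : Type*) [L.Structure M] [Nonempty M] (x : α → M),
        ψ.Realize x ↔ ∃ w : β → M, φ.Realize (Sum.elim x w) := by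
  classical
  let V : Set β := Sum.inr ⁻¹' (φ.freeVarFinset : Set (α ⊕ β))
  have hV : Finite V := φ.freeVarFinset.finite_toSet.preimage Sum.inr_injective.injOn
  let g : φ.freeVarFinset → α ⊕ V
    | ⟨.inl a, _⟩ => .inl a
    | ⟨.inr b, hb⟩ => .inr ⟨b, hb⟩
  let φV : L.Formula (α ⊕ V) := φ.restrictFreeVar g
  refine ⟨φV.iExs V, (hφ.restrictFreeVar g).isExistPos_iExs, fun M _ _ x => ?_⟩
  have realize_φV (w : β → M) :
      φV.Realize (Sum.elim x (w ∘ Subtype.val)) ↔ φ.Realize (Sum.elim x w) :=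
    BoundedFormula.realize_restrictFreeVar (Sum.elim x w) (by rintro ⟨_ | _, _⟩ <;> rfl)
  rw [Formula.realize_iExs, Subtype.val_injective.surjective_comp_right.exists]
  exact exists_congr realize_φV

theorem exists_isExistPos_realize_iff_exists {ι : Type*} [Finite ι] {φ : ι → L.Formula α}
    (hφ : ∀ i, IsExistPos (φ i)) :
    ∃ ψ : L.Formula α, IsExistPos ψ ∧
      ∀ (M : Type*) [L.Structure M] [Nonempty M] (x : α → M),
        ψ.Realize x ↔ ∃ i, (φ i).Realize x := by
  choose m χ hχ hχφ using fun i => (hφ i).exists_isPosQF_exs_eq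
  let incl (i : ι) (j : Fin (m i)) : Σ i, Fin (m i) := ⟨i, j⟩
  have incl_injective (i : ι) : Function.Injective (incl i) :=
    sigma_mk_injective (β := fun i => Fin (m i))
  let θ (i : ι) : L.Formula (α ⊕ Σ i, Fin (m i)) :=
    (χ i).toFormula.relabel (Sum.map id (incl i))
  have hθ (i : ι) : IsPosQF (θ i) := (hχ i).toFormula.relabel _
  refine ⟨(Formula.iSup θ).iExs _, (IsPosQF.iSup hθ).isExistPos_iExs, fun M _ _ x => ?_⟩
  simp only [Formula.realize_iExs, Formula.realize_iSup]
  rw [exists_comm]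
  refine exists_congr fun i => ?_
  calc (∃ w, (θ i).Realize (Sum.elim x w))
      ↔ ∃ w : (Σ i, Fin (m i)) → M, (χ i).Realize x (w ∘ incl i) := by
        simp [θ, Function.comp_def]
    _ ↔ ∃ w, (χ i).Realize x w := (incl_injective i).surjective_comp_right.exists.symm
    _ ↔ (φ i).Realize x := by rw [← BoundedFormula.realize_exs, hχφ]; rfl

end PositiveFormulas

section Homomorphisms

variable {α : Type*} {k : ℕ} {M N : Type*} [L.Structure M] [L.Structure N]

theorem IsPosQF.realize_hom_comp {φ : L.BoundedFormula α k} (hφ : IsPosQF φ) (h : M →[L] N)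
    {x : α → M} {w : Fin k → M} (hx : φ.Realize x w) : φ.Realize (h ∘ x) (h ∘ w) := by
  induction hφ with
  | falsum => exact hx
  | top => exact BoundedFormula.realize_top.2 trivial
  | equal t₁ t₂ =>
    simp only [BoundedFormula.Realize, ← Sum.comp_elim, HomClass.realize_term] at hx ⊢
    rw [hx]
  | inf _ _ ih₁ ih₂ =>
    rw [BoundedFormula.realize_inf] at hx ⊢
    exact hx.imp ih₁ ih₂
  | sup _ _ ih₁ ih₂ =>
    rw [BoundedFormula.realize_sup] at hx ⊢
    exact hx.imp ih₁ ih₂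

theorem IsExistPos.realize_hom_comp {φ : L.BoundedFormula α k} (hφ : IsExistPos φ) (h : M →[L] N)
    {x : α → M} {w : Fin k → M} (hx : φ.Realize x w) : φ.Realize (h ∘ x) (h ∘ w) := by
  induction hφ with
  | of_posQF hφ => exact hφ.realize_hom_comp h hx
  | ex _ ih =>
    rw [BoundedFormula.realize_ex] at hx ⊢
    obtain ⟨b, hb⟩ := hx
    exact ⟨h b, Fin.comp_snoc h w b ▸ ih hb⟩

theorem IsExistPos.preservedByHomsOn {φ : L.Formula α} (hφ : IsExistPos φ) (K : Set (Alg L)) :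
    PreservedByHomsOn K φ := by
  intro A B _ _ h x hx
  have hhx := hφ.realize_hom_comp h hx
  rwa [Subsingleton.elim (h ∘ default) default] at hhx

theorem exists_hom_comp_eq_of_realize_eq [L.IsAlgebraic] {e : α → M}
    (he : Function.Surjective e) {v : α → N}
    (hv : ∀ t₁ t₂ : L.Term α, t₁.realize e = t₂.realize e → t₁.realize v = t₂.realize v) :
    ∃ h : M →[L] N, h ∘ e = v := by
  obtain ⟨r, hr⟩ := he.hasRightInverse
  let h : M →[L] N :=
    { toFun := v ∘ r
      map_fun' := fun f x =>
        hv (.var (r (Structure.funMap f x))) (.func f fun i => .var (r (x i))) (by simp [hr _])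
      map_rel' := fun R => isEmptyElim R }
  exact ⟨h, funext fun c => hv (.var (r (e c))) (.var c) (hr (e c))⟩

end Homomorphisms

section Compactness

open Filter

theorem IsElementary.uprod_mem {K : Set (Alg L)} (hK : IsElementary K) {ι : Type u}
    (F : Ultrafilter ι) {A : ι → Alg L} [∀ i, Nonempty (A i).carrier] (hA : ∀ i, A i ∈ K) :
    Alg.uprod F A ∈ K := by
  obtain ⟨T, hT⟩ := hK
  refine (hT _).2 fun φ hφ => Ultraproduct.sentence_realize φ |>.2 ?_
  exact .of_forall fun i => (hT _).1 (hA i) φ hφ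

theorem IsElementary.exists_finset_realize {K : Set (Alg L)} (hK : IsElementary K) {α : Type*}
    [Nonempty α] {ι : Type u} {Γ : ι → L.Formula α} {φ : L.Formula α}
    (hΓ : ∀ A ∈ K, ∀ x : α → A.carrier, (∀ i, (Γ i).Realize x) → φ.Realize x) :
    ∃ s : Finset ι, ∀ A ∈ K, ∀ x : α → A.carrier,
      (∀ i ∈ s, (Γ i).Realize x) → φ.Realize x := by
  by_contra! hcounter
  choose A hA x hx hφ using hcounter
  have (s : Finset ι) : Nonempty (A s).carrier := .map (x s) ‹_›
  let F : Ultrafilter (Finset ι) := .of atTop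
  let y (a : α) : (F : Filter (Finset ι)).Product fun s => (A s).carrier := fun s => x s a
  have los (χ : L.Formula α) : χ.Realize y ↔ ∀ᶠ s in F, χ.Realize (x s) :=
    Ultraproduct.realize_formula_cast χ fun a s => x s a
  have hy (i : ι) : (Γ i).Realize y := by
    refine (los _).2 (Ultrafilter.of_le atTop ?_)
    filter_upwards [eventually_ge_atTop {i}] with s hs
    exact hx s i (Finset.singleton_subset_iff.1 hs)
  obtain ⟨s, hs⟩ := ((los φ).1 (hΓ _ (hK.uprod_mem F hA) y hy)).exists
  exact hφ s hs

end Compactness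

section Preservation

-- `α` is in `Type` because sets of formulas over it index ultraproducts, so must be in `Type u`.
variable [L.IsAlgebraic] {K : Set (Alg L)} {α : Type} [Nonempty α] {φ : L.Formula α}

theorem PreservedByHomsOn.exists_isExistPos_imp (hK : IsElementary K)
    (hφ : PreservedByHomsOn K φ) {A : Alg L} (hA : A ∈ K) {a : α → A.carrier} (ha : φ.Realize a) :
    ∃ ψ : L.Formula α, IsExistPos ψ ∧ ψ.Realize a ∧
      ∀ B ∈ K, ∀ x : α → B.carrier, ψ.Realize x → φ.Realize x := by
  let e : α ⊕ A.carrier → A.carrier := Sum.elim a id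
  have he : Function.Surjective e := fun c => ⟨.inr c, rfl⟩
  let Diagram := {p : L.Term (α ⊕ A.carrier) × L.Term (α ⊕ A.carrier) //
    p.1.realize e = p.2.realize e}
  let Γ (p : Diagram) : L.Formula (α ⊕ A.carrier) := p.1.1.equal p.1.2
  have diagram_imp : ∀ B ∈ K, ∀ v : α ⊕ A.carrier → B.carrier,
      (∀ p, (Γ p).Realize v) → (φ.relabel Sum.inl).Realize v := by
    intro B hB v hv
    obtain ⟨h, rfl⟩ := exists_hom_comp_eq_of_realize_eq he fun t₁ t₂ ht =>
      Formula.realize_equal.1 (hv ⟨(t₁, t₂), ht⟩)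
    exact Formula.realize_relabel.2 (hφ A B hA hB h a ha)
  obtain ⟨s, hs⟩ := hK.exists_finset_realize diagram_imp
  have hΓ : IsPosQF (Formula.iInf fun p : s => Γ p) :=
    IsPosQF.iInf fun p => isPosQF_termEqual _ _
  obtain ⟨ψ, hψ, realize_ψ⟩ := hΓ.exists_isExistPos_realize_iff
  refine ⟨ψ, hψ, ?_, fun B hB x hx => ?_⟩
  · have : Nonempty A.carrier := .map a ‹_›
    refine (realize_ψ _ a).2 ⟨id, Formula.realize_iInf.2 fun p => ?_⟩
    exact Formula.realize_equal.2 p.1.2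
  · have : Nonempty B.carrier := .map x ‹_›
    obtain ⟨w, hw⟩ := (realize_ψ _ x).1 hx
    rw [Formula.realize_iInf] at hw
    have hφx := Formula.realize_relabel.1 (hs B hB _ fun p hp => hw ⟨p, hp⟩)
    rwa [Sum.elim_comp_inl] at hφx

theorem PreservedByHomsOn.exists_isExistPos_equivOn (hK : IsElementary K)
    (hφ : PreservedByHomsOn K φ) :
    ∃ ψ : L.Formula α, IsExistPos ψ ∧ EquivOn K φ ψ := by
  let Implicant := {ψ : L.Formula α // IsExistPos ψ ∧
    ∀ A ∈ K, ∀ x : α → A.carrier, ψ.Realize x → φ.Realize x}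
  have not_of_forall_not : ∀ A ∈ K, ∀ x : α → A.carrier,
      (∀ ψ : Implicant, ψ.1.not.Realize x) → φ.not.Realize x := by
    intro A hA x hx
    refine Formula.realize_not.2 fun hφx => ?_
    obtain ⟨ψ, hψ, hψx, hψφ⟩ := hφ.exists_isExistPos_imp hK hA hφx
    exact Formula.realize_not.1 (hx ⟨ψ, hψ, hψφ⟩) hψx
  obtain ⟨s, hs⟩ := hK.exists_finset_realize not_of_forall_not
  obtain ⟨ψ, hψ, realize_ψ⟩ :=
    exists_isExistPos_realize_iff_exists fun χ : s => χ.1.2.1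
  refine ⟨ψ, hψ, fun A hA x => ?_⟩
  have : Nonempty A.carrier := .map x ‹_›
  rw [realize_ψ]
  refine ⟨fun hφx => ?_, fun ⟨χ, hχ⟩ => χ.1.2.2 A hA x hχ⟩
  by_contra! hnone
  exact Formula.realize_not.1
    (hs A hA x fun χ hχ => Formula.realize_not.2 (hnone ⟨χ, hχ⟩)) hφx

end Preservation

section PartialFunctions

variable {K : Set (Alg L)} {n : ℕ} {f : PartialFunOn K n} {φ : L.Formula (Fin (n + 1))}

theorem DefinedBy.congr {ψ : L.Formula (Fin (n + 1))} (hφ : DefinedBy f φ) (hφψ : EquivOn K φ ψ) :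
    DefinedBy f ψ :=
  fun A hA x b => (hφ A hA x b).trans (hφψ A hA _)

theorem DefinedBy.isOperationOn_iff (hφ : DefinedBy f φ) :
    IsOperationOn f ↔ PreservedByHomsOn K φ := by
  have comp_snoc {A B : Alg L} (h : A.carrier →[L] B.carrier) (x : Fin n → A.carrier)
      (b : A.carrier) : (Fin.snoc (fun i => h (x i)) (h b) : Fin (n + 1) → B.carrier) =
        fun i => h ((Fin.snoc x b : Fin (n + 1) → A.carrier) i) :=
    (Fin.comp_snoc h x b).symm
  constructor
  · intro hf A B hA hB h x hx
    rw [← Fin.snoc_init_self x] at hx ⊢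
    rw [← comp_snoc, ← hφ B hB]
    exact hf A B hA hB h _ _ ((hφ A hA _ _).2 hx)
  · intro hpres A B hA hB h x b hb
    rw [hφ, comp_snoc]
    exact hpres A B hA hB h _ ((hφ A hA x b).1 hb)

end PartialFunctions

/-- Let `K` be an elementary class of algebras (in a purely functional
language). A partial function `f` on `K` is an implicit operation of `K` if and only if `f` is
defined by an existential positive formula. -/
theorem statement_0 {L : FirstOrder.Language.{u, u}} [L.IsAlgebraic]
    {K : Set (Alg L)} (hK : IsElementary K) {n : ℕ} (hn : 0 < n)
    (f : PartialFunOn K n) :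
    IsImplicitOp f ↔ ∃ φ : L.Formula (Fin (n + 1)), IsExistPos φ ∧ DefinedBy f φ := by
  constructor
  · rintro ⟨⟨φ, hφ⟩, hf⟩
    obtain ⟨ψ, hψ, hφψ⟩ := (hφ.isOperationOn_iff.1 hf).exists_isExistPos_equivOn hK
    exact ⟨ψ, hψ, hφ.congr hφψ⟩
  · rintro ⟨φ, hpos, hφ⟩
    exact ⟨⟨φ, hφ⟩, hφ.isOperationOn_iff.2 (hpos.preservedByHomsOn K)⟩

end Impl
end

section
/- Let K be an elementary class of algebras closed under direct products, and let φ be a first-order formula that is preserved by homomorphisms in K and preserved by direct products in K. Then φ is equivalent in K to a primitive positive formula. -/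
namespace Impl

open FirstOrder Language

universe u v

variable {L : FirstOrder.Language.{u, u}}

/-!
Taking the product of one counterexample for each primitive positive formula that `φ` does not
imply yields a member `A` of `K` and a tuple `a` realizing `φ` such that every pp formula true of
`a` is implied by `φ` in `K`. Since `φ` is preserved by homomorphisms, it holds of the image of `a`
under every homomorphism from `A` into a member of `K`. Such homomorphisms are the solutions of the
infinite system of all equations true in `A`, with the elements of `A` as unknowns; by compactness,
finitely many of these equations already force `φ`, and existentially quantifying the unknowns in
them gives a pp formula. It implies `φ`, and it is implied by `φ` because it is true of `a`.
-/

universe w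

variable {α : Type*} {β : Type*} {γ : Type*}

section PrimitivePositive

theorem IsConjEq.iInf [Finite β] {k : ℕ} {f : β → L.BoundedFormula α k}
    (h : ∀ b, IsConjEq (f b)) : IsConjEq (BoundedFormula.iInf f) := by
  simp only [BoundedFormula.iInf]
  induction (@Finset.univ β (Fintype.ofFinite β)).toList with
  | nil => exact .top
  | cons b l ih => exact (h b).inf ih

theorem IsPP.exs {k : ℕ} {ψ : L.BoundedFormula α k} (h : IsPP ψ) :
    IsPP (BoundedFormula.exs ψ : L.Formula α) := by
  induction k with
  | zero => exact h
  | succ k ih => exact ih h.ex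

variable {M N : Type*} [L.Structure M] [L.Structure N]

theorem IsConjEq.realize_comp {k : ℕ} {ψ : L.BoundedFormula α k} (h : IsConjEq ψ)
    (f : M →[L] N) {v : α → M} {xs : Fin k → M} (hψ : ψ.Realize v xs) :
    ψ.Realize (f ∘ v) (f ∘ xs) := by
  induction h with
  | top => exact BoundedFormula.realize_top.2 trivial
  | equal t₁ t₂ =>
    simp only [BoundedFormula.Realize, ← Sum.comp_elim, HomClass.realize_term] at hψ ⊢
    rw [hψ]
  | inf _ _ ih₁ ih₂ =>
    rw [BoundedFormula.realize_inf] at hψ ⊢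
    exact ⟨ih₁ hψ.1, ih₂ hψ.2⟩

theorem IsPP.boundedFormula_realize_comp {k : ℕ} {ψ : L.BoundedFormula α k} (h : IsPP ψ)
    (f : M →[L] N) {v : α → M} {xs : Fin k → M} (hψ : ψ.Realize v xs) :
    ψ.Realize (f ∘ v) (f ∘ xs) := by
  induction h with
  | of_conjEq h => exact h.realize_comp f hψ
  | ex _ ih =>
    obtain ⟨c, hc⟩ := BoundedFormula.realize_ex.1 hψ
    refine BoundedFormula.realize_ex.2 ⟨f c, ?_⟩
    rw [← Fin.comp_snoc]
    exact ih hc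

theorem IsPP.realize_comp {ψ : L.Formula α} (h : IsPP ψ) (f : M →[L] N) {v : α → M}
    (hψ : ψ.Realize v) : ψ.Realize (f ∘ v) := by
  rw [Formula.Realize, Subsingleton.elim default (f ∘ default)]
  exact h.boundedFormula_realize_comp f hψ

end PrimitivePositive

section Equations

variable {M N : Type*} [L.Structure M] [L.Structure N]

variable (L) in
/-- The equations, encoded as pairs of terms with variables in `γ`, that hold in `M` under the
assignment `v`. For `v = Sum.elim a id` this is the positive (equational) diagram of `M` with
names for the elements of the tuple `a` and of `M`. -/
def trueEqs (v : γ → M) : Set (L.Term γ × L.Term γ) :=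
  {e | e.1.realize v = e.2.realize v}

theorem realize_eq_of_eqOn_varFinset [DecidableEq γ] (t : L.Term γ) {v v' : γ → M}
    (h : Set.EqOn v v' t.varFinset) : t.realize v = t.realize v' := by
  rw [← Term.realize_restrictVar' subset_rfl, ← Term.realize_restrictVar' subset_rfl (v := v')]
  congr 1
  exact funext fun x => h x.2

theorem exists_finset_trueEqs_congr (s : Finset (L.Term γ × L.Term γ)) :
    ∃ F : Finset γ, ∀ (M : Type w) [L.Structure M] (v v' : γ → M), Set.EqOn v v' F →
      ↑s ⊆ trueEqs L v → ↑s ⊆ trueEqs L v' := by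
  classical
  refine ⟨s.biUnion fun e => e.1.varFinset ∪ e.2.varFinset, fun M _ v v' hvv' hv e he => ?_⟩
  have hvars : e.1.varFinset ∪ e.2.varFinset ⊆ s.biUnion fun e => e.1.varFinset ∪ e.2.varFinset :=
    Finset.subset_biUnion_of_mem (fun e => e.1.varFinset ∪ e.2.varFinset) he
  have h₁ := realize_eq_of_eqOn_varFinset e.1 fun x hx =>
    hvv' (hvars (Finset.mem_union_left _ hx))
  have h₂ := realize_eq_of_eqOn_varFinset e.2 fun x hx =>
    hvv' (hvars (Finset.mem_union_right _ hx))
  exact h₁.symm.trans ((hv he).trans h₂)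

theorem exists_fin_rightInvOn (F : Finset β) :
    ∃ (k : ℕ) (name : β → Fin k) (elem : Fin k → β), Set.RightInvOn name elem F := by
  classical
  rcases isEmpty_or_nonempty β with _ | ⟨⟨p⟩⟩
  · exact ⟨0, isEmptyElim, Fin.elim0, fun x => isEmptyElim x⟩
  -- Elements outside `F` need a name too, so `F` is enlarged to a nonempty set.
  let e := (insert p F).equivFin
  have : Nonempty (Fin (insert p F).card) := ⟨e ⟨p, Finset.mem_insert_self p F⟩⟩
  refine ⟨_, Function.invFun fun i => (e.symm i : β), fun i => e.symm i, fun x hx => ?_⟩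
  have hx' : ∃ i, (e.symm i : β) = x := ⟨e ⟨x, Finset.mem_insert_of_mem hx⟩, by simp⟩
  exact Function.invFun_eq hx'

theorem exists_isPP_realize_iff_exists_subset_trueEqs
    (s : Finset (L.Term (α ⊕ β) × L.Term (α ⊕ β))) :
    ∃ ψ : L.Formula α, IsPP ψ ∧ ∀ (M : Type w) [L.Structure M] (v : α → M),
      ψ.Realize v ↔ ∃ g : β → M, ↑s ⊆ trueEqs L (Sum.elim v g) := by
  obtain ⟨F, hF⟩ := exists_finset_trueEqs_congr s
  obtain ⟨k, name, elem, hname⟩ := exists_fin_rightInvOn F.toRight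
  let eqn (e : s) : L.BoundedFormula α k := .equal
    (e.1.1.relabel (Sum.map id name)) (e.1.2.relabel (Sum.map id name))
  have realize_eqn (M : Type w) [L.Structure M] (v : α → M) (xs : Fin k → M) :
      (BoundedFormula.iInf eqn).Realize v xs ↔ ↑s ⊆ trueEqs L (Sum.elim v (xs ∘ name)) := by
    simp [eqn, BoundedFormula.Realize, Set.subset_def, trueEqs, Sum.elim_comp_map]
  refine ⟨(BoundedFormula.iInf eqn).exs,
    (IsPP.of_conjEq (.iInf fun _ => .equal _ _)).exs, fun M _ v => ?_⟩
  simp only [BoundedFormula.realize_exs, realize_eqn]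
  refine ⟨fun ⟨xs, hxs⟩ => ⟨xs ∘ name, hxs⟩, fun ⟨g, hg⟩ => ⟨g ∘ elem, hF M _ _ ?_ hg⟩⟩
  rintro (i | x) hx
  · rfl
  · exact congrArg g (hname (Finset.mem_toRight.2 hx)).symm

theorem exists_hom_comp_eq_of_trueEqs_subset [L.IsAlgebraic] {a : α → M} {b : α → N} {g : M → N}
    (h : trueEqs L (Sum.elim a id) ⊆ trueEqs L (Sum.elim b g)) :
    ∃ f : M →[L] N, f ∘ a = b := by
  refine ⟨⟨g, fun {n} F x => ?_, fun {n} r => isEmptyElim r⟩, funext fun i => ?_⟩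
  · exact @h (Term.var (Sum.inr (Structure.funMap F x)),
      Term.func F fun j => Term.var (Sum.inr (x j))) rfl
  · exact @h (Term.var (Sum.inr (a i)), Term.var (Sum.inl i)) rfl

end Equations

section Ultraproducts

/-- The element of an ultraproduct represented by a family of elements of the factors. -/
def Alg.uprodMk {ι : Type u} (U : Ultrafilter ι) {B : ι → Alg L} (x : ∀ i, (B i).carrier) :
    (Alg.uprod U B).carrier :=
  Quotient.mk' (s := (U : Filter ι).productSetoid fun i => (B i).carrier) x

theorem mem_trueEqs_uprodMk_iff {ι : Type u} {U : Ultrafilter ι} {B : ι → Alg L}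
    {v : ∀ i, γ → (B i).carrier} {e : L.Term γ × L.Term γ} :
    e ∈ trueEqs L (fun x => Alg.uprodMk U fun i => v i x) ↔
      ∀ᶠ i in (U : Filter ι), e ∈ trueEqs L (v i) := by
  have realize_uprodMk (t : L.Term γ) :
      t.realize (fun x => Alg.uprodMk U fun i => v i x) =
        Alg.uprodMk U fun i => t.realize (v i) :=
    Ultraproduct.term_realize_cast (fun x i => v i x) t
  rw [trueEqs, Set.mem_ofPred_eq, realize_uprodMk, realize_uprodMk]
  exact Quotient.eq''

theorem exists_ultrafilter_forall_eventually_mem (ι : Type*) :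
    ∃ U : Ultrafilter (Finset ι), ∀ i, ∀ᶠ s in (U : Filter (Finset ι)), i ∈ s := by
  classical
  refine ⟨Ultrafilter.of Filter.atTop, fun i => Ultrafilter.of_le _ ?_⟩
  filter_upwards [Filter.eventually_ge_atTop {i}] with s hs
  exact Finset.singleton_subset_iff.1 hs

theorem IsElementary.closedUnderIso {K : Set (Alg L)} (hK : IsElementary K) :
    ClosedUnderIso K := by
  obtain ⟨T, hT⟩ := hK
  rintro A B hA ⟨f⟩
  exact (hT B).2 fun θ hθ => (StrongHomClass.realize_sentence f θ).1 ((hT A).1 hA θ hθ)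

theorem IsElementary.closedUnderUprod [L.IsAlgebraic] {K : Set (Alg L)} (hK : IsElementary K) :
    ClosedUnderUprod K := by
  intro ι U B hB
  -- The theorem of Łoś needs nonempty factors; an ultraproduct with an empty factor is itself
  -- empty, hence isomorphic to that factor.
  by_cases hne : ∀ i, Nonempty (B i).carrier
  · obtain ⟨T, hT⟩ := hK
    refine (hT _).2 fun θ hθ => (Ultraproduct.sentence_realize θ).2 ?_
    exact Filter.Eventually.of_forall fun i => (hT _).1 (hB i) θ hθ
  · obtain ⟨i, hi⟩ := not_forall.1 hne
    have hBi : IsEmpty (B i).carrier := not_nonempty_iff.1 hi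
    have hprod : IsEmpty (Alg.uprod U B).carrier := ⟨Quotient.ind fun x => hBi.elim (x i)⟩
    exact hK.closedUnderIso (B i) _ (hB i) ⟨⟨Equiv.equivOfIsEmpty _ _,
      fun F x => hBi.elim (Structure.funMap F x), fun r => isEmptyElim r⟩⟩

theorem exists_finset_trueEqs_forall_realize [L.IsAlgebraic] {K : Set (Alg L)}
    (hU : ClosedUnderUprod K) {α : Type} {φ : L.Formula α} {A : Alg L} {a : α → A.carrier}
    (hφ : ∀ B ∈ K, ∀ f : A.carrier →[L] B.carrier, φ.Realize (f ∘ a)) :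
    ∃ s : Finset (L.Term (α ⊕ A.carrier) × L.Term (α ⊕ A.carrier)),
      ↑s ⊆ trueEqs L (Sum.elim a id) ∧
      ∀ B ∈ K, ∀ (b : α → B.carrier) (g : A.carrier → B.carrier),
        ↑s ⊆ trueEqs L (Sum.elim b g) → φ.Realize b := by
  rcases isEmpty_or_nonempty A.carrier with hA | hA
  · refine ⟨∅, by simp, fun B hB b g _ => ?_⟩
    obtain ⟨f⟩ : Nonempty (A.carrier →[L] B.carrier) :=
      ⟨⟨hA.elim, fun F x => hA.elim (Structure.funMap F x), fun r => isEmptyElim r⟩⟩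
    rw [show b = f ∘ a from funext fun i => hA.elim (a i)]
    exact hφ B hB f
  · -- If no finite set `s` works, the counterexamples `B s` have an ultraproduct that solves every
    -- equation of the diagram of `A` and so receives a homomorphism from `A`.
    by_contra! hcon
    choose B hB b g hg hb using fun s : Finset (trueEqs L (Sum.elim a id)) =>
      hcon (s.map (Function.Embedding.subtype _)) (by simp)
    have : ∀ s, Nonempty (B s).carrier := fun s => hA.map (g s)
    obtain ⟨U, hmem⟩ := exists_ultrafilter_forall_eventually_mem (trueEqs L (Sum.elim a id))
    have hdiagram : trueEqs L (Sum.elim a id) ⊆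
        trueEqs L (Sum.elim (fun i => Alg.uprodMk U fun s => b s i)
          fun x => Alg.uprodMk U fun s => g s x) := by
      intro e he
      have hsolve : ∀ᶠ s in (U : Filter _), e ∈ trueEqs L (Sum.elim (b s) (g s)) := by
        filter_upwards [hmem ⟨e, he⟩] with s hs
        exact hg s (by simpa using ⟨he, hs⟩)
      convert mem_trueEqs_uprodMk_iff.2 hsolve using 2
      exact funext (Sum.rec (fun _ => rfl) fun _ => rfl)
    obtain ⟨f, hf⟩ := exists_hom_comp_eq_of_trueEqs_subset hdiagram
    have hφb := hφ _ (hU _ U B hB) f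
    rw [hf] at hφb
    obtain ⟨s, hs⟩ :=
      ((Ultraproduct.realize_formula_cast φ fun i s => b s i).1 hφb).exists
    exact hb s hs

end Ultraproducts

section FreeRealization

/-- The projection of a direct product onto a factor, as a homomorphism. -/
def Alg.proj {ι : Type u} (A : ι → Alg L) (i : ι) : (Alg.pi A).carrier →[L] (A i).carrier where
  toFun x := x i
  map_fun' _ _ := rfl
  map_rel' _ _ h := h i

/-- The tuple `a` of `A` is a free realization of `φ` in `K`: it realizes `φ`, and the pp formulas
true of `a` are only those that `φ` implies throughout `K`. -/
structure IsFreeRealization (K : Set (Alg L)) (φ : L.Formula α) (A : Alg L)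
    (a : α → A.carrier) : Prop where
  mem : A ∈ K
  realize : φ.Realize a
  realize_of_isPP : ∀ {ψ : L.Formula α}, IsPP ψ → ψ.Realize a →
    ∀ {B : Alg L}, B ∈ K → ∀ {b : α → B.carrier}, φ.Realize b → ψ.Realize b

theorem exists_isFreeRealization {K : Set (Alg L)} (hP : ClosedUnderProd K) {α : Type}
    {φ : L.Formula α} (hprod : PreservedByProdsOn K φ) :
    ∃ (A : Alg L) (a : α → A.carrier), IsFreeRealization K φ A a := by
  let NotImplied : Type u := {ψ : L.Formula α // IsPP ψ ∧
    ∃ B ∈ K, ∃ b : α → B.carrier, φ.Realize b ∧ ¬ ψ.Realize b}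
  choose B hB b hφ hψ using fun ψ : NotImplied => ψ.2.2
  refine ⟨Alg.pi B, fun i ψ => b ψ i, hP _ B hB, hprod _ B hB _ hφ, ?_⟩
  intro ψ hpp hψa C hC c hφc
  by_contra hψc
  let χ : NotImplied := ⟨ψ, hpp, C, hC, c, hφc, hψc⟩
  exact hψ χ (hpp.realize_comp (Alg.proj B χ) hψa)

end FreeRealization

theorem statement_1_general [L.IsAlgebraic] {K : Set (Alg L)} (hU : ClosedUnderUprod K)
    (hP : ClosedUnderProd K) {α : Type} (φ : L.Formula α) (hhom : PreservedByHomsOn K φ)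
    (hprod : PreservedByProdsOn K φ) :
    ∃ ψ : L.Formula α, IsPP ψ ∧ EquivOn K φ ψ := by
  obtain ⟨A, a, hfree⟩ := exists_isFreeRealization hP hprod
  obtain ⟨s, hs, hsφ⟩ := exists_finset_trueEqs_forall_realize hU fun B hB f =>
    hhom A B hfree.mem hB f a hfree.realize
  obtain ⟨ψ, hψ, hψs⟩ := exists_isPP_realize_iff_exists_subset_trueEqs s
  refine ⟨ψ, hψ, fun B hB b => ⟨fun hφb => ?_, fun hψb => ?_⟩⟩
  · exact hfree.realize_of_isPP hψ ((hψs A.carrier a).2 ⟨id, hs⟩) hB hφb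
  · obtain ⟨g, hg⟩ := (hψs B.carrier b).1 hψb
    exact hsφ B hB b g hg

/-- Let `K` be an elementary class of algebras closed under direct products,
and let `φ` be a first-order formula preserved by homomorphisms and by direct products in `K`.
Then `φ` is equivalent in `K` to a primitive positive formula. -/
theorem statement_1 {L : FirstOrder.Language.{u, u}} [L.IsAlgebraic]
    {K : Set (Alg L)} (hK : IsElementary K) (hP : ClosedUnderProd K)
    {m : ℕ} (φ : L.Formula (Fin m))
    (hhom : PreservedByHomsOn K φ) (hprod : PreservedByProdsOn K φ) :
    ∃ ψ : L.Formula (Fin m), IsPP ψ ∧ EquivOn K φ ψ :=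
  statement_1_general hK.closedUnderUprod hP φ hhom hprod

end Impl
end

section
/- For every field F and all a, b ∈ F: a²b = a and ab² = b hold if and only if b = wi(a), where the weak inverse wi(a) is a⁻¹ if a ≠ 0 and 0 if a = 0. Consequently the conjunction of equations φ = (x²y ≈ x) ⊓ (xy² ≈ y) is functional in the quasivariety of reduced commutative rings, and it defines a unary implicit operation f of this quasivariety such that f^A is total and coincides with weak inversion on every field A. -/
/-!
If `b` and `c` both satisfy the equations for `a`, then `b = ab² = (a²c)b² = (ab²)ac = abc`, and by
symmetry `c = acb`; hence `b = c` in every commutative monoid. The equations mention only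
products, so homomorphisms preserve them. In a field they say `ab = 1` when `a ≠ 0` and force
`b = 0` when `a = 0`.
-/

universe u v

/-- The formula `φ(a, b) = (a²b ≈ a) ⊓ (ab² ≈ b)`, expressing that `b` is a weak inverse of `a`.
It is stated for monoids because it involves multiplication only. -/
def IsWeakInverse {M : Type*} [Monoid M] (a b : M) : Prop :=
  a ^ 2 * b = a ∧ a * b ^ 2 = b

namespace IsWeakInverse

theorem map {M N F : Type*} [Monoid M] [Monoid N] [FunLike F M N] [MonoidHomClass F M N]
    {a b : M} (hab : IsWeakInverse a b) (h : F) : IsWeakInverse (h a) (h b) := by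
  constructor
  · rw [← map_pow, ← map_mul, hab.1]
  · rw [← map_pow, ← map_mul, hab.2]

section CommMonoid

variable {M : Type*} [CommMonoid M] {a b c : M}

theorem eq_mul_mul (hb : IsWeakInverse a b) (hc : IsWeakInverse a c) : b = a * b * c :=
  calc
    b = a * b ^ 2 := hb.2.symm
    _ = a ^ 2 * c * b ^ 2 := by rw [hc.1]
    _ = a * (a * b ^ 2) * c := by rw [sq a]; ac_rfl
    _ = a * b * c := by rw [hb.2]

theorem unique (hb : IsWeakInverse a b) (hc : IsWeakInverse a c) : b = c :=
  calc
    b = a * b * c := hb.eq_mul_mul hc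
    _ = a * c * b := mul_right_comm a b c
    _ = c := (hc.eq_mul_mul hb).symm

end CommMonoid

end IsWeakInverse

section GroupWithZero

variable {G : Type*} [GroupWithZero G] {a b : G}

theorem isWeakInverse_inv (a : G) : IsWeakInverse a a⁻¹ := by
  constructor
  · rw [sq, mul_self_mul_inv]
  · simpa only [inv_inv, mul_assoc, sq] using inv_mul_mul_self a⁻¹

theorem isWeakInverse_iff_eq_inv : IsWeakInverse a b ↔ b = a⁻¹ := by
  refine ⟨fun hab ↦ ?_, fun hb ↦ hb ▸ isWeakInverse_inv a⟩
  obtain rfl | ha := eq_or_ne a 0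
  · rw [← hab.2, zero_mul, inv_zero]
  · refine eq_inv_of_mul_eq_one_right (mul_left_cancel₀ ha ?_)
    rw [← mul_assoc, ← sq, hab.1, mul_one]

-- Since `0⁻¹ = 0` in Mathlib, `a⁻¹` is the weak inverse `wi(a)` even at `a = 0`.
theorem eq_inv_iff_ne_zero_or_eq_zero :
    b = a⁻¹ ↔ (a ≠ 0 ∧ b = a⁻¹) ∨ (a = 0 ∧ b = 0) := by
  obtain rfl | ha := eq_or_ne a 0
  · simp
  · simp [ha]

end GroupWithZero

theorem statement_4_general :
    (∀ (G : Type u) [GroupWithZero G] (a b : G),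
      IsWeakInverse a b ↔ ((a ≠ 0 ∧ b = a⁻¹) ∨ (a = 0 ∧ b = 0))) ∧
    (∀ (M : Type u) [CommMonoid M] (a b c : M),
      IsWeakInverse a b → IsWeakInverse a c → b = c) ∧
    (∀ (M : Type u) (N : Type v) [Monoid M] [Monoid N] (h : M →* N) (a b : M),
      IsWeakInverse a b → IsWeakInverse (h a) (h b)) ∧
    (∀ (G : Type u) [GroupWithZero G] (a : G), ∃ b : G,
      IsWeakInverse a b ∧ ((a ≠ 0 ∧ b = a⁻¹) ∨ (a = 0 ∧ b = 0))) :=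
  ⟨fun _ _ _ _ ↦ isWeakInverse_iff_eq_inv.trans eq_inv_iff_ne_zero_or_eq_zero,
    fun _ _ _ _ _ hb hc ↦ hb.unique hc,
    fun _ _ _ _ h _ _ hab ↦ hab.map h,
    fun _ _ a ↦ ⟨a⁻¹, isWeakInverse_inv a, eq_inv_iff_ne_zero_or_eq_zero.mp rfl⟩⟩

/-- For every field `F` and all `a, b ∈ F`: `a²b = a` and `ab² = b` hold if
and only if `b` is the weak inverse of `a` (that is, `a⁻¹` if `a ≠ 0`, and `0` if `a = 0`).
Consequently, the conjunction of equations `φ = (x²y ≈ x) ⊓ (xy² ≈ y)` is functional in the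
quasivariety of reduced commutative rings, the partial function it defines is preserved by
homomorphisms of reduced commutative rings (so it is an implicit operation of this
quasivariety), and it is total on every field, where it coincides with weak inversion. -/
theorem statement_4 :
    (∀ (F : Type) [Field F] (a b : F),
      (a ^ 2 * b = a ∧ a * b ^ 2 = b) ↔ ((a ≠ 0 ∧ b = a⁻¹) ∨ (a = 0 ∧ b = 0))) ∧
    (∀ (R : Type) [CommRing R], (∀ x : R, x * x = 0 → x = 0) →
      ∀ a b c : R, a ^ 2 * b = a → a * b ^ 2 = b → a ^ 2 * c = a → a * c ^ 2 = c → b = c) ∧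
    (∀ (R S : Type) [CommRing R] [CommRing S],
      (∀ x : R, x * x = 0 → x = 0) → (∀ x : S, x * x = 0 → x = 0) →
        ∀ (h : R →+* S) (a b : R), a ^ 2 * b = a → a * b ^ 2 = b →
          h a ^ 2 * h b = h a ∧ h a * h b ^ 2 = h b) ∧
    (∀ (F : Type) [Field F] (a : F), ∃ b : F,
      (a ^ 2 * b = a ∧ a * b ^ 2 = b) ∧ ((a ≠ 0 ∧ b = a⁻¹) ∨ (a = 0 ∧ b = 0))) := by
  obtain ⟨iff_inv, unique, map, total⟩ := statement_4_general
  exact ⟨fun F _ ↦ iff_inv F, fun R _ _ a b c hb hb' hc hc' ↦ unique R a b c ⟨hb, hb'⟩ ⟨hc, hc'⟩,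
    fun R S _ _ _ _ h a b hb hb' ↦ map R S h a b ⟨hb, hb'⟩, fun F _ ↦ total F⟩
end

section
/- For all integers a, b: b = |a| if and only if there exist integers z1, z2, z3, z4 with b = z1² + z2² + z3² + z4² and a² = b². Moreover, the absolute value on ℤ is not definable by a conjunction of equations: there is no finite family of polynomials p1(x,y), …, pn(x,y) with integer coefficients such that for all a, b ∈ ℤ one has (pi(a,b) = 0 for every i ≤ n) if and only if b = |a|. -/
/-!
On `ℤ` the nonnegative elements are exactly the sums of four squares (Lagrange), and `|a|` is the
nonnegative square root of `a ^ 2`. Polynomial equations alone cannot see signs: an equation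
satisfied by every pair `(t, t)` with `0 ≤ t` restricts to a one-variable polynomial with infinitely
many roots, so it is also satisfied by `(-1, -1)`.
-/

theorem int_nonneg_iff_exists_sum_four_squares (b : ℤ) :
    0 ≤ b ↔ ∃ z₁ z₂ z₃ z₄ : ℤ, b = z₁ ^ 2 + z₂ ^ 2 + z₃ ^ 2 + z₄ ^ 2 := by
  constructor
  · intro hb
    obtain ⟨z₁, z₂, z₃, z₄, hz⟩ := Nat.sum_four_squares b.toNat
    exact ⟨z₁, z₂, z₃, z₄, by rw [← Int.toNat_of_nonneg hb, ← hz]; push_cast; rfl⟩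
  · rintro ⟨z₁, z₂, z₃, z₄, rfl⟩
    positivity

theorem eq_abs_iff_nonneg_and_sq_eq_sq {R : Type*} [CommRing R] [LinearOrder R]
    [IsStrictOrderedRing R] (a b : R) : b = |a| ↔ 0 ≤ b ∧ a ^ 2 = b ^ 2 := by
  constructor
  · rintro rfl
    exact ⟨abs_nonneg a, (sq_abs a).symm⟩
  · rintro ⟨hb, hab⟩
    rw [← abs_of_nonneg hb, ← sq_eq_sq_iff_abs_eq_abs, hab]

theorem int_eq_abs_iff_exists_sum_four_squares_and_sq_eq_sq (a b : ℤ) :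
    b = |a| ↔
      ∃ z₁ z₂ z₃ z₄ : ℤ, b = z₁ ^ 2 + z₂ ^ 2 + z₃ ^ 2 + z₄ ^ 2 ∧ a ^ 2 = b ^ 2 := by
  rw [eq_abs_iff_nonneg_and_sq_eq_sq, int_nonneg_iff_exists_sum_four_squares]
  simp only [exists_and_right]

theorem polynomial_eval_aeval_mvPolynomial {R σ : Type*} [CommSemiring R]
    (γ : σ → Polynomial R) (p : MvPolynomial σ R) (t : R) :
    (MvPolynomial.aeval γ p).eval t = MvPolynomial.eval (fun i => (γ i).eval t) p := by
  rw [MvPolynomial.aeval_def, MvPolynomial.polynomial_eval_eval₂, ← MvPolynomial.eval₂_id]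
  congr 1
  ext r
  simp

theorem mvPolynomial_eval_curve_eq_zero_of_infinite_zeros {R σ : Type*} [CommRing R] [IsDomain R]
    (γ : σ → Polynomial R) (p : MvPolynomial σ R)
    (hp : {t : R | MvPolynomial.eval (fun i => (γ i).eval t) p = 0}.Infinite) (t : R) :
    MvPolynomial.eval (fun i => (γ i).eval t) p = 0 := by
  have restriction_eq_zero : MvPolynomial.aeval γ p = 0 := by
    apply Polynomial.eq_zero_of_infinite_isRoot
    simpa only [Polynomial.IsRoot, polynomial_eval_aeval_mvPolynomial] using hp
  rw [← polynomial_eval_aeval_mvPolynomial, restriction_eq_zero, Polynomial.eval_zero]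

theorem not_exists_equations_iff_eq_abs (R ι : Type*) [CommRing R] [LinearOrder R]
    [IsStrictOrderedRing R] :
    ¬ ∃ p : ι → MvPolynomial (Fin 2) R,
        ∀ a b : R, (∀ i, MvPolynomial.eval ![a, b] (p i) = 0) ↔ b = |a| := by
  rintro ⟨p, hp⟩
  have diagonal (t : R) : ![t, t] = fun _ => (Polynomial.X : Polynomial R).eval t := by
    ext i; fin_cases i <;> simp
  have vanish_of_nonneg (i : ι) {t : R} (ht : 0 ≤ t) : MvPolynomial.eval ![t, t] (p i) = 0 :=
    (hp t t).2 (abs_of_nonneg ht).symm i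
  have vanish_on_diagonal (i : ι) (t : R) : MvPolynomial.eval ![t, t] (p i) = 0 := by
    simp only [diagonal] at vanish_of_nonneg ⊢
    exact mvPolynomial_eval_curve_eq_zero_of_infinite_zeros _ (p i)
      ((Set.Ici_infinite 0).mono fun _ ht => vanish_of_nonneg i ht) t
  have neg_one_eq_abs : (-1 : R) = |-1| := (hp (-1) (-1)).1 fun i => vanish_on_diagonal i (-1)
  have neg_one_nonneg : (0 : R) ≤ -1 := neg_one_eq_abs ▸ abs_nonneg (-1)
  exact neg_one_lt_zero.not_ge neg_one_nonneg

theorem statement_5_general :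
    (∀ a b : ℤ, b = |a| ↔
      ∃ z₁ z₂ z₃ z₄ : ℤ, b = z₁ ^ 2 + z₂ ^ 2 + z₃ ^ 2 + z₄ ^ 2 ∧ a ^ 2 = b ^ 2) ∧
    ∀ (R ι : Type*) [CommRing R] [LinearOrder R] [IsStrictOrderedRing R],
      ¬ ∃ p : ι → MvPolynomial (Fin 2) R,
          ∀ a b : R, (∀ i, MvPolynomial.eval ![a, b] (p i) = 0) ↔ b = |a| :=
  ⟨int_eq_abs_iff_exists_sum_four_squares_and_sq_eq_sq,
    fun R ι => not_exists_equations_iff_eq_abs R ι⟩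

/-- For all integers `a, b`: `b = |a|` if and only if there exist integers
`z₁, z₂, z₃, z₄` with `b = z₁² + z₂² + z₃² + z₄²` and `a² = b²`. Moreover, the absolute value
on `ℤ` is not definable by a (finite) conjunction of equations: there is no finite family of
polynomials `p₁(x,y), …, pₙ(x,y)` with integer coefficients such that for all `a, b ∈ ℤ` one
has `pᵢ(a,b) = 0` for every `i ≤ n` if and only if `b = |a|`. -/
theorem statement_5 :
    (∀ a b : ℤ, b = |a| ↔
      ∃ z₁ z₂ z₃ z₄ : ℤ, b = z₁ ^ 2 + z₂ ^ 2 + z₃ ^ 2 + z₄ ^ 2 ∧ a ^ 2 = b ^ 2) ∧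
    ¬ ∃ (n : ℕ) (p : Fin n → MvPolynomial (Fin 2) ℤ),
        ∀ a b : ℤ, (∀ i, MvPolynomial.eval ![a, b] (p i) = 0) ↔ b = |a| := by
  exact statement_5_general.imp_right fun h ⟨n, hn⟩ => h ℤ (Fin n) hn
end

section
/- Let K be a class of algebras closed under finite direct products that has the amalgamation property, and let A ≤ B ≤ C be algebras with B, C ∈ K. Then the dominion of A in B relative to K equals the intersection of the dominion of A in C relative to K with B, i.e., d_K(A,B) = d_K(A,C) ∩ B. -/
namespace Impl

open FirstOrder Language

universe u v

variable {L : FirstOrder.Language.{u, u}}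

/-!
Restricting homomorphisms along `B ≤ C` shows that `d_K(A,B) ⊆ d_K(A,C)`. For the converse, two
homomorphisms `g, h : B → D` need not extend to `C`, but their graphs are embeddings of `B` into
`B × D ∈ K`, equal at exactly the points where `g` and `h` are. Amalgamating `B × D` with one copy
of `C` along each graph yields two embeddings of `C` into a member of `K` that, on `B`, also agree
exactly where `g` and `h` do.
-/

/-- The family consisting of two algebras. Its direct product `Alg.pi (Alg.pair A B)` serves as
`A × B`: unlike `Alg.prod A B`, it is literally an instance of the products quantified over in
`ClosedUnderFinProd`. The index type is lifted to the universe required by `Alg.pi`. -/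
def Alg.pair (A B : Alg L) : ULift.{u} Bool → Alg L
  | ⟨true⟩ => A
  | ⟨false⟩ => B

theorem ClosedUnderFinProd.pi_pair_mem {K : Set (Alg L)} (hK : ClosedUnderFinProd K)
    {A B : Alg L} (hA : A ∈ K) (hB : B ∈ K) : Alg.pi (Alg.pair A B) ∈ K := by
  refine hK _ inferInstance _ ?_
  rintro ⟨_ | _⟩
  exacts [hB, hA]

/-- The graph `x ↦ (x, g x)` of a homomorphism, as an embedding into the product of its domain and
codomain. -/
def graphEmbedding {A B : Alg L} (g : A.carrier →[L] B.carrier) :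
    A.carrier ↪[L] (Alg.pi (Alg.pair A B)).carrier where
  toFun x
    | ⟨true⟩ => x
    | ⟨false⟩ => g x
  inj' _ _ hxy := congrFun hxy ⟨true⟩
  map_fun' f x := by
    funext i
    rcases i with ⟨_ | _⟩
    exacts [g.map_fun f x, rfl]
  map_rel' r x := by
    refine ⟨fun hx => hx ⟨true⟩, fun hx => ?_⟩
    rintro ⟨_ | _⟩
    exacts [g.map_rel r x hx, hx]

theorem graphEmbedding_apply_eq_iff {A B : Alg L} {g h : A.carrier →[L] B.carrier}
    {x : A.carrier} : graphEmbedding g x = graphEmbedding h x ↔ g x = h x := by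
  refine ⟨fun hx => congrFun hx ⟨false⟩, fun hx => ?_⟩
  funext i
  rcases i with ⟨_ | _⟩
  exacts [hx, rfl]

theorem HasAmalgamation.exists_amalgam_two_copies {K : Set (Alg L)} (hK : HasAmalgamation K)
    {B C P : Alg L} (hB : B ∈ K) (hC : C ∈ K) (hP : P ∈ K) (e : B.carrier ↪[L] C.carrier)
    (f₁ f₂ : B.carrier ↪[L] P.carrier) :
    ∃ D ∈ K, ∃ (p₁ p₂ : C.carrier ↪[L] D.carrier) (q : P.carrier ↪[L] D.carrier),
      (∀ b, p₁ (e b) = q (f₁ b)) ∧ ∀ b, p₂ (e b) = q (f₂ b) := by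
  obtain ⟨E, hE, p, q, hpq⟩ := hK B C P hB hC hP e f₁
  obtain ⟨D, hD, p', r, hpr⟩ := hK B C E hB hC hE e (q.comp f₂)
  exact ⟨D, hD, r.comp p, p', r.comp q, fun b => congrArg r (hpq b), hpr⟩

theorem dominion_subset_preimage_dominion_image (K : Set (Alg L)) {M N : Type u} [L.Structure M]
    [L.Structure N] (f : M →[L] N) (s : Set M) :
    dominion K M s ⊆ f ⁻¹' dominion K N (f '' s) :=
  fun _ hb D hD g h hgh =>
    hb D hD (g.comp f) (h.comp f) fun a ha => hgh (f a) (Set.mem_image_of_mem f ha)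

theorem preimage_dominion_image_subset_dominion {K : Set (Alg L)} (hfp : ClosedUnderFinProd K)
    (hAP : HasAmalgamation K) {B C : Alg L} (hB : B ∈ K) (hC : C ∈ K)
    (e : B.carrier ↪[L] C.carrier) (s : Set B.carrier) :
    e ⁻¹' dominion K C.carrier (e '' s) ⊆ dominion K B.carrier s := by
  intro b hb D hD g h hgh
  obtain ⟨E, hE, p₁, p₂, q, hp₁, hp₂⟩ := hAP.exists_amalgam_two_copies hB hC
    (hfp.pi_pair_mem hB hD) e (graphEmbedding g) (graphEmbedding h)
  have agree_iff (x : B.carrier) : p₁ (e x) = p₂ (e x) ↔ g x = h x := by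
    rw [hp₁, hp₂, q.injective.eq_iff, graphEmbedding_apply_eq_iff]
  have agree_on_image : ∀ c ∈ e '' s, p₁ c = p₂ c :=
    Set.forall_mem_image.2 fun a ha => (agree_iff a).2 (hgh a ha)
  exact (agree_iff b).1 (hb E hE p₁.toHom p₂.toHom agree_on_image)

theorem statement_7_general {K : Set (Alg L)} (hfp : ClosedUnderFinProd K)
    (hAP : HasAmalgamation K) {B C : Alg L} (hB : B ∈ K) (hC : C ∈ K)
    (e : B.carrier ↪[L] C.carrier) (s : Set B.carrier) :
    dominion K B.carrier s = e ⁻¹' dominion K C.carrier (e '' s) :=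
  (dominion_subset_preimage_dominion_image K e.toHom s).antisymm
    (preimage_dominion_image_subset_dominion hfp hAP hB hC e s)

/-- Let `K` be a class of algebras closed under finite direct products that
has the amalgamation property, and let `A ≤ B ≤ C` be algebras with `B, C ∈ K`. Then
`d_K(A,B) = d_K(A,C) ∩ B`. -/
theorem statement_7 {L : FirstOrder.Language.{u, u}} [L.IsAlgebraic]
    {K : Set (Alg L)} (hfp : ClosedUnderFinProd K) (hAP : HasAmalgamation K)
    (C : Alg L) (hC : C ∈ K) (B : L.Substructure C.carrier)
    (hB : (Alg.mk (↥B) : Alg L) ∈ K)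
    (A : L.Substructure C.carrier) (hAB : A ≤ B) :
    dominion K (↥B) (Subtype.val ⁻¹' (A : Set C.carrier)) =
      Subtype.val ⁻¹' dominion K C.carrier (A : Set C.carrier) := by
  have image_A : B.subtype '' (Subtype.val ⁻¹' (A : Set C.carrier)) = A :=
    Subtype.image_preimage_val .. |>.trans (Set.inter_eq_right.2 hAB)
  exact (statement_7_general hfp hAP hB hC B.subtype _).trans (by rw [image_A]; rfl)

end Impl
end
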